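/- Let n be a natural number and let a, d be complex numbers such that (2a+1)_k ≠ 0 and (d)_k ≠ 0 for all 0 ≤ k ≤ 2n, and (a+1/2)_n ≠ 0. Then the terminating hypergeometric sum Σ_{k=0}^{2n} (−2n)_k (a)_k (d+1)_k 2^k / ((2a+1)_k (d)_k k!) equals (1/2)_n / (a+1/2)_n. -/

import Mathlib

/-- The Pochhammer symbol `(a)_k = a (a+1) ⋯ (a+k-1)`. -/
noncomputable def poch (a : ℂ) (k : ℕ) : ℂ := Polynomial.eval a (ascPochhammer ℂ k)

theorem poch_zero' (a : ℂ) : poch a 0 = 1 := by simp [poch]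

theorem poch_succ' (a : ℂ) (k : ℕ) : poch a (k + 1) = poch a k * (a + k) := by
  simp [poch, ascPochhammer_succ_eval]

theorem poch_shift (d : ℂ) (k : ℕ) : d * poch (d + 1) k = poch d k * (d + k) := by
  induction k with
  | zero => simp [poch_zero']
  | succ k ih =>
    rw [poch_succ', poch_succ', ← mul_assoc, ih]
    push_cast
    ring

theorem poch_neg (N k : ℕ) (hk : k ≤ N) :
    poch (-(N : ℂ)) k = (-1) ^ k * (Nat.factorial k : ℂ) * (N.choose k : ℂ) := by
  induction k with
  | zero => simp [poch_zero']
  | succ k ih =>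
    have h := Nat.choose_succ_right_eq N k
    have h2 : ((N.choose (k + 1) : ℕ) : ℂ) * ((k : ℂ) + 1) = N.choose k * ((N : ℂ) - k) := by
      rw [← Nat.cast_sub (by omega)]
      exact_mod_cast h
    rw [poch_succ', ih (by omega), Nat.factorial_succ]
    push_cast
    linear_combination (-(-1) ^ (k + 1) * (Nat.factorial k : ℂ)) * h2

/-- The binomial transform. -/
noncomputable def bt (w : ℕ → ℂ) (m : ℕ) : ℂ :=
  ∑ k ∈ Finset.range (m + 1), (m.choose k : ℂ) * w k

theorem bt_ext (w : ℕ → ℂ) (m K : ℕ) (h : m + 1 ≤ K) :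
    ∑ k ∈ Finset.range K, (m.choose k : ℂ) * w k = bt w m := by
  unfold bt
  symm
  apply Finset.sum_subset
  · intro x hx
    simp at hx ⊢
    omega
  · intro x _ hx
    simp at hx
    rw [Nat.choose_eq_zero_of_lt (by omega)]
    simp

theorem bt_rec (w : ℕ → ℂ) (a c : ℂ) (m : ℕ)
    (hw : ∀ k ≤ m + 1, (c + k) * w (k + 1) = -2 * (a + k) * w k) :
    (c + m + 1) * bt w (m + 2) + (2 * a - c) * bt w (m + 1) - (m + 1) * bt w m = 0 := by
  have key : ∀ K ≤ m + 2, ∑ k ∈ Finset.range (K + 1),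
      ((c + m + 1) * (((m + 2).choose k : ℂ) * w k)
        + (2 * a - c) * (((m + 1).choose k : ℂ) * w k) - (m + 1) * ((m.choose k : ℂ) * w k))
      = 2 * ((m + 1).choose K : ℂ) * (a + K) * w K := by
    intro K hK
    induction K with
    | zero => simp; ring
    | succ K ih =>
      rw [Finset.sum_range_succ, ih (by omega)]
      have h1 := hw K (by omega)
      have e1 : ((m + 2).choose (K + 1) : ℂ) = (m + 1).choose K + (m + 1).choose (K + 1) := by
        exact_mod_cast Nat.choose_succ_succ (m + 1) K
      have e2 : ((m + 1).choose (K + 1) : ℂ) = m.choose K + m.choose (K + 1) := by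
        exact_mod_cast Nat.choose_succ_succ m K
      have e3 : ((m : ℂ) + 1) * m.choose K = (m + 1).choose (K + 1) * ((K : ℂ) + 1) := by
        exact_mod_cast Nat.add_one_mul_choose_eq m K
      have e4 : ((m : ℂ) + 2) * (m + 1).choose K = (m + 2).choose (K + 1) * ((K : ℂ) + 1) := by
        exact_mod_cast Nat.add_one_mul_choose_eq (m + 1) K
      rw [e1] at e4 ⊢
      push_cast
      linear_combination ((m + 1).choose K : ℂ) * h1 + w (K + 1) * e4
        + w (K + 1) * e3 + (m + 1) * w (K + 1) * e2
  have h := key (m + 2) le_rfl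
  rw [Finset.sum_sub_distrib, Finset.sum_add_distrib, ← Finset.mul_sum, ← Finset.mul_sum,
    ← Finset.mul_sum, bt_ext _ _ _ (by omega), bt_ext _ _ _ (by omega),
    bt_ext _ _ _ (by omega), Nat.choose_eq_zero_of_lt (by omega)] at h
  rw [h]
  simp

theorem bt_odd (w : ℕ → ℂ) (a : ℂ) (n : ℕ)
    (hw : ∀ k ≤ 2 * n, (2 * a + k) * w (k + 1) = -2 * (a + k) * w k)
    (hc : ∀ k ≤ 2 * n, 2 * a + k ≠ 0) : bt w (2 * n + 1) = 0 := by
  induction n with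
  | zero =>
    have h := hw 0 (by simp)
    have h0 := hc 0 (by simp)
    simp [bt, Finset.sum_range_succ] at h h0 ⊢
    have : (2 * a) * (w 0 + w 1) = 0 := by linear_combination h
    simpa [h0] using this
  | succ n ih =>
    have h := bt_rec w a (2 * a) (2 * n + 1) (fun k hk => hw k (by omega))
    rw [ih (fun k hk => hw k (by omega)) (fun k hk => hc k (by omega))] at h
    have h0 := hc (2 * n + 2) (by omega)
    have e : (2 * a + ((2 * n + 2 : ℕ) : ℂ)) * bt w (2 * n + 1 + 2) = 0 := by
      push_cast at h ⊢
      linear_combination h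
    exact (mul_eq_zero.mp e).resolve_left h0

theorem bt_even (w : ℕ → ℂ) (a : ℂ) (n : ℕ) (w0 : w 0 = 1)
    (hw : ∀ k < 2 * n, (2 * a + 1 + k) * w (k + 1) = -2 * (a + k) * w k)
    (hc : ∀ k < 2 * n, 2 * a + 1 + k ≠ 0) :
    bt w (2 * n) * poch (a + 1 / 2) n = poch (1 / 2) n ∧
    ∀ m, n = m + 1 → bt w (2 * m + 1) = bt w (2 * n) := by
  induction n with
  | zero => simp [bt, poch_zero', w0]
  | succ n ih =>
    obtain ⟨i1, i2⟩ := ih (fun k hk => hw k (by omega)) (fun k hk => hc k (by omega))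
    have o : (2 * a + 1 + 2 * n) * bt w (2 * n + 1) = (2 * n + 1) * bt w (2 * n) := by
      rcases n with _ | m
      · have h := hw 0 (by omega)
        simp [bt, Finset.sum_range_succ, w0] at h ⊢
        linear_combination h
      · have h := bt_rec w a (2 * a + 1) (2 * m + 1) (fun k hk => hw k (by omega))
        have i3 := i2 m rfl
        rw [i3] at h
        have r1 : 2 * m + 1 + 2 = 2 * (m + 1) + 1 := by ring
        have r2 : 2 * m + 1 + 1 = 2 * (m + 1) := by ring
        rw [r1, r2] at h
        push_cast at h ⊢
        linear_combination h
    have h := bt_rec w a (2 * a + 1) (2 * n) (fun k hk => hw k (by omega))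
    have h0 := hc (2 * n + 1) (by omega)
    have e : bt w (2 * n + 1) = bt w (2 * (n + 1)) := by
      have : (2 * a + 1 + ((2 * n + 1 : ℕ) : ℂ)) *
          (bt w (2 * (n + 1)) - bt w (2 * n + 1)) = 0 := by
        have r1 : 2 * n + 2 = 2 * (n + 1) := by ring
        rw [r1] at h
        push_cast at h ⊢
        linear_combination h - o
      have := (mul_eq_zero.mp this).resolve_left h0
      linear_combination -this
    refine ⟨?_, ?_⟩
    · rw [← e, poch_succ', poch_succ', ← i1]
      linear_combination (1 / 2 * poch (a + 1 / 2) n) * o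
    · intro m hm
      obtain rfl : n = m := by omega
      exact e

theorem terminating_3F2_even
    (n : ℕ) (a d : ℂ)
    (h2a1 : ∀ k ≤ 2 * n, poch (2 * a + 1) k ≠ 0)
    (hd : ∀ k ≤ 2 * n, poch d k ≠ 0)
    (ha : poch (a + 1 / 2) n ≠ 0) :
    ∑ k ∈ Finset.range (2 * n + 1),
        poch (-((2 * n : ℕ) : ℂ)) k * poch a k * poch (d + 1) k * 2 ^ k /
          (poch (2 * a + 1) k * poch d k * (Nat.factorial k : ℂ))
      = poch (1 / 2) n / poch (a + 1 / 2) n := by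
  rcases n with _ | n
  · simp [poch_zero']
  have hc : ∀ k < 2 * (n + 1), 2 * a + 1 + (k : ℂ) ≠ 0 := by
    intro k hk h
    apply h2a1 (k + 1) (by omega)
    rw [poch_succ', h, mul_zero]
  have hd0 : d ≠ 0 := by
    have := hd 1 (by omega)
    simpa [poch_succ', poch_zero'] using this
  set w : ℕ → ℂ := fun k => (-2) ^ k * poch a k / poch (2 * a + 1) k with hwdef
  have hw : ∀ k < 2 * (n + 1), (2 * a + 1 + k) * w (k + 1) = -2 * (a + k) * w k := by
    intro k hk
    have h1 := hc k hk
    have h2 := h2a1 k (by omega)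
    simp only [hwdef, poch_succ']
    field_simp
    ring
  have w0 : w 0 = 1 := by simp [hwdef, poch_zero']
  have E := (bt_even w a (n + 1) w0 hw hc).1
  have O := bt_odd (fun k => w (k + 1)) (a + 1) n
    (fun k hk => by
      have := hw (k + 1) (by omega)
      push_cast at this
      linear_combination this)
    (fun k hk => by
      have := hc (k + 1) (by omega)
      push_cast at this
      intro h
      apply this
      linear_combination h)
  rw [eq_div_iff ha, ← E]
  congr 1
  have T : ∀ k ∈ Finset.range (2 * (n + 1) + 1),
      poch (-((2 * (n + 1) : ℕ) : ℂ)) k * poch a k * poch (d + 1) k * 2 ^ k /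
          (poch (2 * a + 1) k * poch d k * (Nat.factorial k : ℂ))
      = ((2 * (n + 1)).choose k : ℂ) * w k
        + d⁻¹ * ((k : ℂ) * ((2 * (n + 1)).choose k : ℂ) * w k) := by
    intro k hk
    have hk' : k ≤ 2 * (n + 1) := by simp at hk; omega
    have h1 := h2a1 k hk'
    have h2 := hd k hk'
    have h3 : (Nat.factorial k : ℂ) ≠ 0 := by exact_mod_cast Nat.factorial_ne_zero k
    have h4 : poch (d + 1) k = poch d k * (d + k) / d := by
      rw [eq_div_iff hd0, ← poch_shift]; ring
    rw [poch_neg _ _ hk', h4]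
    have h5 : (-2 : ℂ) ^ k = (-1) ^ k * 2 ^ k := by rw [← mul_pow]; norm_num
    simp only [hwdef, h5]
    field_simp
  rw [Finset.sum_congr rfl T, Finset.sum_add_distrib, ← Finset.mul_sum]
  have Z : ∑ k ∈ Finset.range (2 * (n + 1) + 1),
      (k : ℂ) * ((2 * (n + 1)).choose k : ℂ) * w k = 0 := by
    rw [Finset.sum_range_succ']
    have : ∀ k ∈ Finset.range (2 * (n + 1)),
        ((k + 1 : ℕ) : ℂ) * ((2 * (n + 1)).choose (k + 1) : ℂ) * w (k + 1)
        = (2 * n + 2 : ℂ) * (((2 * n + 1).choose k : ℂ) * w (k + 1)) := by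
      intro k _
      have e3 : ((2 * n + 1 : ℂ) + 1) * (2 * n + 1).choose k
          = (2 * n + 1 + 1).choose (k + 1) * ((k : ℂ) + 1) := by
        exact_mod_cast Nat.add_one_mul_choose_eq (2 * n + 1) k
      have r : 2 * (n + 1) = 2 * n + 1 + 1 := by ring
      rw [r]
      push_cast
      linear_combination (-w (k + 1)) * e3
    rw [Finset.sum_congr rfl this, ← Finset.mul_sum]
    unfold bt at O
    have r : 2 * (n + 1) = 2 * n + 1 + 1 := by ring
    rw [r, O]
    simp
  rw [Z]
  simp [bt]
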